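/- Let $q$ be a prime power, $\mathbb{F}_q$ the finite field with $q$ elements, and $n$ a positive integer. Let $t_1, \ldots, t_r$ be positive integers and set $\sigma = \frac{t_1 t_2 \cdots t_r}{\max\{t_1,\ldots,t_r\}}$. Let $\mathcal{D}$ be a family of $r$-decompositions of $\mathbb{F}_q^n$ such that for each $k \in \{1,\ldots,r\}$ the family $\mathcal{D}_k$ is $t_k$-chain free. Then $|\mathcal{D}| \le m_1 + \cdots + m_\sigma$, where $m_1,\ldots,m_\sigma$ are the $\sigma$ largest values of $\genfrac{[}{]}{0pt}{}{n}{a_1,\ldots,a_r}_q \prod_{i<j} q^{a_i a_j}$ over all $r$-tuples of non-negative integers $(a_1,\ldots,a_r)$ with $a_1+\cdots+a_r = n$ (with $m_i = 0$ when $i$ exceeds the number $\binom{n+r-1}{r-1}$ of such tuples). -/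

import Mathlib

/-!
The proof is a LYM-type argument over ordered bases.

Call an ordered basis `v₁, …, vₙ` of `𝔽_q^n` compatible with a decomposition `D` of type
`a = (dim D₁, …, dim D_r)` if `D₁` is the span of the first `a₁` vectors, `D₂` the span of the
next `a₂` vectors, and so on. Each `D` has at least `∏ |GL_{aᵢ}(q)|` compatible bases
(`prod_numBases_le`), and `|GL_n(q)| = w(a) ∏ |GL_{aᵢ}(q)|`, where `w(a)` is the quantity in the
bound (`weight_mul`).

For a fixed basis, the compatible members of the family are determined by their types. Among those
with given `a₁, …, a_{k-1}`, the `k`-th components are spans of nested blocks of the basis, so they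
form a chain and `a_k` takes at most `t_k` values; the last entry is determined by the sum
(`card_compatible_le`). The order of the blocks is arbitrary, so the index with the largest `t_k`
can be put last, and at most `σ` members are compatible. Double counting gives
`∑_{D ∈ 𝒟} 1 / w(type D) ≤ σ` (`sum_prod_numBases_le_of_chainFree`). The same count applied to the
members of a single type `a` shows that there are at most `w(a)` of them (`card_filter_dims_le`).

These two facts imply the bound by linear programming duality (`card_le_sumLargest`): with `τ` the
`(σ + 1)`-st largest value of `w`, the size of the family is at most `∑_a (w(a) - τ)⁺ + σ τ`, which
is the sum of the `σ` largest values.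
-/

/-- A family `S` of elements of a partial order is `t`-chain free if it contains
no chain of `t + 1` distinct elements totally ordered. -/
def ChainFree {α : Type*} [Preorder α] (t : ℕ) (S : Set α) : Prop :=
  ¬ ∃ c : Fin (t + 1) → α, StrictMono c ∧ ∀ i, c i ∈ S

/-- The `q`-factorial `[m]_q! = (q^m - 1)(q^{m-1} - 1) ⋯ (q - 1)`. -/
def qFact (q m : ℕ) : ℕ := ∏ i ∈ Finset.range m, (q ^ (i + 1) - 1)

/-- The sum of the `k` largest elements of a multiset of naturals. -/
def sumLargest (M : Multiset ℕ) (k : ℕ) : ℕ :=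
  (((M.sort (· ≤ ·)).reverse).take k).sum

/-! ### Sums of the largest elements -/

lemma exists_threshold_list (L : List ℕ) (hL : L.Pairwise (· ≥ ·)) (k : ℕ) :
    ∃ τ : ℕ, (τ = 0 ∨ τ ∈ L) ∧ (L.map (· - τ)).sum + k * τ ≤ (L.take k).sum := by
  induction L generalizing k with
  | nil => exact ⟨0, by simp⟩
  | cons x L ih =>
    rw [List.pairwise_cons] at hL
    cases k with
    | zero =>
      refine ⟨x, by simp, ?_⟩
      have : (L.map (· - x)).sum = 0 := by
        rw [List.sum_eq_zero_iff]
        intro y hy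
        obtain ⟨z, hz, rfl⟩ := List.mem_map.1 hy
        exact Nat.sub_eq_zero_of_le (hL.1 z hz)
      simp [this]
    | succ k =>
      obtain ⟨τ, hτ, h⟩ := ih hL.2 k
      have hx : τ ≤ x := by
        rcases hτ with rfl | hτ
        · exact Nat.zero_le _
        · exact hL.1 τ hτ
      refine ⟨τ, by rcases hτ with h | h <;> simp [h], ?_⟩
      simp only [List.map_cons, List.sum_cons, List.take_succ_cons, Nat.add_mul]
      omega

/-- A dual certificate for `sumLargest`: for `τ` the `(k + 1)`-st largest element (or `0`),
the sum of the `k` largest elements is at least `∑ (x - τ)⁺ + k τ`. The subtraction is the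
truncated one. -/
lemma exists_threshold (M : Multiset ℕ) (k : ℕ) :
    ∃ τ : ℕ, (M.map (· - τ)).sum + k * τ ≤ sumLargest M k := by
  have hs : ((M.sort (· ≤ ·)).reverse).Pairwise (· ≥ ·) := by
    rw [List.pairwise_reverse]
    exact Multiset.pairwise_sort M (· ≤ ·)
  obtain ⟨τ, -, h⟩ := exists_threshold_list _ hs k
  refine ⟨τ, le_trans (le_of_eq ?_) h⟩
  have hM : ((M.sort (· ≤ ·)).reverse : Multiset ℕ) = M := by
    rw [Multiset.coe_reverse, Multiset.sort_eq]
  conv_lhs => rw [← hM]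
  rw [Multiset.map_coe, Multiset.sum_coe]

/-- The linear programming step: if a family of objects has at most `w a` members of each type
`a`, and satisfies the LYM-type inequality `∑ 1 / w ≤ k`, then its size is at most the sum of
the `k` largest values of `w`. -/
lemma card_le_sumLargest {β α : Type*} [DecidableEq α] (S : Finset β) (A : Finset α)
    (ty : β → α) (w : α → ℕ) (k : ℕ) (hty : ∀ x ∈ S, ty x ∈ A) (hw : ∀ a ∈ A, 0 < w a)
    (hfib : ∀ a ∈ A, (S.filter (fun x => ty x = a)).card ≤ w a)
    (hlym : ∑ x ∈ S, (1 : ℚ) / w (ty x) ≤ k) :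
    S.card ≤ sumLargest (A.val.map w) k := by
  obtain ⟨τ, hτ⟩ := exists_threshold (A.val.map w) k
  refine le_trans ?_ hτ
  rw [Multiset.map_map]
  change S.card ≤ ∑ a ∈ A, (w a - τ) + k * τ
  have h1 : ∑ x ∈ S, ((w (ty x) - τ : ℕ) : ℚ) / w (ty x) ≤ ∑ a ∈ A, ((w a - τ : ℕ) : ℚ) := by
    rw [← Finset.sum_fiberwise_of_maps_to hty]
    refine Finset.sum_le_sum fun a ha => ?_
    have hpos : (0 : ℚ) < w a := by exact_mod_cast hw a ha
    have : ∑ x ∈ S with ty x = a, ((w (ty x) - τ : ℕ) : ℚ) / w (ty x)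
        = ∑ x ∈ S with ty x = a, ((w a - τ : ℕ) : ℚ) / w a := by
      refine Finset.sum_congr rfl fun x hx => ?_
      rw [(Finset.mem_filter.1 hx).2]
    rw [this, Finset.sum_const, nsmul_eq_mul, ← mul_div_assoc, div_le_iff₀ hpos, mul_comm]
    exact mul_le_mul_of_nonneg_left (by exact_mod_cast hfib a ha) (Nat.cast_nonneg _)
  have h2 : (S.card : ℚ) ≤ ∑ a ∈ A, ((w a - τ : ℕ) : ℚ) + k * τ := by
    calc (S.card : ℚ) = ∑ x ∈ S, (1 : ℚ) := by simp
      _ ≤ ∑ x ∈ S, (((w (ty x) - τ : ℕ) : ℚ) / w (ty x) + 1 / w (ty x) * τ) := by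
        refine Finset.sum_le_sum fun x hx => ?_
        have hpos : (0 : ℚ) < w (ty x) := by exact_mod_cast hw _ (hty x hx)
        rw [div_mul_eq_mul_div, ← add_div, le_div_iff₀ hpos, one_mul, one_mul]
        have : w (ty x) ≤ (w (ty x) - τ) + τ := by omega
        exact_mod_cast this
      _ = ∑ x ∈ S, ((w (ty x) - τ : ℕ) : ℚ) / w (ty x) + (∑ x ∈ S, (1 : ℚ) / w (ty x)) * τ := by
        rw [Finset.sum_add_distrib, Finset.sum_mul]
      _ ≤ _ := add_le_add h1 (mul_le_mul_of_nonneg_right hlym (Nat.cast_nonneg _))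
  exact_mod_cast h2

/-! ### Arithmetic of `q`-multinomial coefficients -/

/-- The number `∏_{i < m} (q^m - q^i)` of ordered bases of an `m`-dimensional space over a field
with `q` elements. -/
def numBases (q m : ℕ) : ℕ := ∏ i : Fin m, (q ^ m - q ^ (i : ℕ))

lemma numBases_eq (q m : ℕ) : numBases q m = q ^ (m.choose 2) * qFact q m := by
  have h : numBases q m = ∏ i ∈ Finset.range m, (q ^ i * (q ^ (m - 1 - i + 1) - 1)) := by
    rw [numBases, Fin.prod_univ_eq_prod_range (fun i => q ^ m - q ^ i)]
    refine Finset.prod_congr rfl fun i hi => ?_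
    have := Finset.mem_range.1 hi
    rw [Nat.mul_sub, mul_one, ← pow_add]
    congr 2
    omega
  rw [h, Finset.prod_mul_distrib, Finset.prod_pow_eq_pow_sum, Finset.sum_range_id,
    Nat.choose_two_right, Finset.prod_range_reflect (fun i => q ^ (i + 1) - 1), qFact]

lemma qFact_pos {q : ℕ} (hq : 1 < q) (m : ℕ) : 0 < qFact q m :=
  Finset.prod_pos fun i _ => Nat.sub_pos_of_lt (Nat.one_lt_pow (by omega) hq)

lemma qFact_succ (q m : ℕ) : qFact q (m + 1) = qFact q m * (q ^ (m + 1) - 1) := by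
  rw [qFact, Finset.prod_range_succ, ← qFact]

/-- Integrality of `q`-binomial coefficients, by the `q`-Pascal rule. -/
lemma qFact_mul_dvd {q : ℕ} (hq : 0 < q) (m k : ℕ) :
    qFact q m * qFact q k ∣ qFact q (m + k) := by
  induction hs : m + k generalizing m k with
  | zero =>
    obtain ⟨rfl, rfl⟩ : m = 0 ∧ k = 0 := by omega
    simp [qFact]
  | succ s ih =>
    rcases m with _ | m
    · simp [qFact, ← hs]
    rcases k with _ | k
    · simp [qFact, ← hs]
    have h1 := ih m (k + 1) (by omega)
    have h2 := ih (m + 1) k (by omega)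
    have hpas : q ^ (s + 1) - 1 = (q ^ (m + 1) - 1) * q ^ (k + 1) + (q ^ (k + 1) - 1) := by
      have e : q ^ (s + 1) = q ^ (m + 1) * q ^ (k + 1) := by rw [← pow_add]; congr 1; omega
      have p1 : 1 ≤ q ^ (k + 1) := Nat.one_le_pow _ _ hq
      have p2 : 1 ≤ q ^ (m + 1) := Nat.one_le_pow _ _ hq
      have p3 : q ^ (k + 1) ≤ q ^ (m + 1) * q ^ (k + 1) := Nat.le_mul_of_pos_left _ p2
      rw [e, Nat.sub_mul, one_mul]
      omega
    rw [qFact_succ q s, hpas, mul_add]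
    refine dvd_add ?_ ?_
    · rw [qFact_succ q m, mul_right_comm, ← mul_assoc, mul_right_comm (qFact q s)]
      exact ((mul_dvd_mul_right h1 (q ^ (m + 1) - 1)).mul_right (q ^ (k + 1))).trans
        (by rw [mul_right_comm])
    · rw [qFact_succ q k, ← mul_assoc]
      exact mul_dvd_mul_right h2 _

lemma prod_qFact_dvd {q : ℕ} (hq : 0 < q) {ι : Type*} (s : Finset ι) (a : ι → ℕ) :
    ∏ i ∈ s, qFact q (a i) ∣ qFact q (∑ i ∈ s, a i) := by
  classical
  induction s using Finset.induction_on with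
  | empty => simp
  | insert i s hi ih =>
    rw [Finset.prod_insert hi, Finset.sum_insert hi]
    exact (mul_dvd_mul_left _ ih).trans (qFact_mul_dvd hq _ _)

lemma choose_two_add (m k : ℕ) : (m + k).choose 2 = m.choose 2 + k.choose 2 + m * k := by
  have h : ∀ x : ℕ, 2 * x.choose 2 + x = x * x := fun x => by
    rw [Nat.choose_two_right, Nat.mul_div_cancel' (Nat.even_mul_pred_self x).two_dvd]
    cases x <;> simp [Nat.mul_succ, Nat.succ_mul]
  nlinarith [h (m + k), h m, h k]

lemma choose_two_sum {r : ℕ} (a : Fin r → ℕ) :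
    (∑ i, a i).choose 2 = ∑ i, (a i).choose 2 +
      ∑ p ∈ Finset.univ.filter (fun p : Fin r × Fin r => p.1 < p.2), a p.1 * a p.2 := by
  have key : ∀ {r : ℕ} (a : Fin r → ℕ),
      (∑ i, a i).choose 2 = ∑ i, (a i).choose 2 + ∑ i, ∑ j, if i < j then a i * a j else 0 := by
    intro r
    induction r with
    | zero => simp
    | succ r ih =>
      intro a
      rw [Fin.sum_univ_succ, choose_two_add, ih]
      simp only [Fin.sum_univ_succ, Fin.succ_lt_succ_iff, Fin.succ_pos, Fin.not_lt_zero, if_true,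
        if_false, zero_add, Finset.mul_sum]
      ring
  rw [key, Finset.sum_filter, Fintype.sum_prod_type]

/-- The quantity maximised in the bound: the `q`-multinomial coefficient of `a` times
`∏_{i < j} q^{aᵢ aⱼ}`. When `∑ aᵢ = n`, it is the number of decompositions of `𝔽_q^n` of type
`a`. -/
def weight (q n : ℕ) {r : ℕ} (a : Fin r → ℕ) : ℕ :=
  (qFact q n / ∏ i, qFact q (a i)) *
    ∏ p ∈ Finset.univ.filter (fun p : Fin r × Fin r => p.1 < p.2), q ^ (a p.1 * a p.2)

lemma weight_mul {q n : ℕ} (hq : 0 < q) {r : ℕ} (a : Fin r → ℕ) (ha : ∑ i, a i = n) :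
    weight q n a * ∏ i, numBases q (a i) = numBases q n := by
  have hd := prod_qFact_dvd hq Finset.univ a
  rw [ha] at hd
  simp only [weight, numBases_eq, Finset.prod_mul_distrib, Finset.prod_pow_eq_pow_sum]
  conv_rhs => rw [← Nat.div_mul_cancel hd, ← ha, choose_two_sum, pow_add, ha]
  ring

lemma numBases_pos {q : ℕ} (hq : 1 < q) (m : ℕ) : 0 < numBases q m := by
  rw [numBases_eq]
  exact Nat.mul_pos (Nat.pow_pos (by omega)) (qFact_pos hq m)

/-! ### Ordered bases compatible with a decomposition -/

section Compatible

variable {F V : Type*} [Field F] [AddCommGroup V] [Module F V]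

/-- The sum of the entries of `a` before position `k`. -/
def offset {r : ℕ} (a : Fin r → ℕ) (k : Fin r) : ℕ :=
  ∑ i : Fin k, a (Fin.castLE k.2.le i)

/-- The span of the `l` consecutive vectors of `v` starting at position `s`. -/
def blockSpan {n : ℕ} (v : Fin n → V) (s l : ℕ) : Submodule F V :=
  Submodule.span F (v '' {m | s ≤ (m : ℕ) ∧ (m : ℕ) < s + l})

/-- The type of a tuple of subspaces: the tuple of their dimensions. -/
noncomputable def dims {r : ℕ} (D : Fin r → Submodule F V) : Fin r → ℕ :=
  fun k => Module.finrank F (D k)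

/-- `D` is compatible with `v` if `D 0` is spanned by the first `dim (D 0)` vectors of `v`, `D 1`
by the next `dim (D 1)` vectors, and so on. -/
def Compatible {n r : ℕ} (D : Fin r → Submodule F V) (v : Fin n → V) : Prop :=
  ∀ k, D k = blockSpan v (offset (dims D) k) (dims D k)

lemma blockSpan_mono {n : ℕ} (v : Fin n → V) (s : ℕ) {l l' : ℕ} (h : l ≤ l') :
    (blockSpan v s l : Submodule F V) ≤ blockSpan v s l' :=
  Submodule.span_mono (Set.image_mono fun _ hm => ⟨hm.1, by have := hm.2; omega⟩)

lemma Compatible.ext {n r : ℕ} {D E : Fin r → Submodule F V} {v : Fin n → V}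
    (hD : Compatible D v) (hE : Compatible E v) (h : dims D = dims E) : D = E := by
  funext k
  rw [hD k, hE k, h]

variable [Finite V]

lemma sum_dims {n r : ℕ} (hV : Module.finrank F V = n) {D : Fin r → Submodule F V}
    (hD : DirectSum.IsInternal D) : ∑ k, dims D k = n := by
  have e := (hD.collectedBasis fun k => Module.finBasis F (D k))
  have := Module.finrank_eq_card_basis e
  rw [hV] at this
  simp only [Fintype.card_sigma, Fintype.card_fin] at this
  exact this.symm

variable [Fintype F]

/-- Concatenating ordered bases of the summands gives pairwise distinct ordered bases of the
whole space, each compatible with the decomposition. -/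
lemma prod_numBases_le {n r : ℕ} (hV : Module.finrank F V = n) {D : Fin r → Submodule F V}
    (hD : DirectSum.IsInternal D) :
    ∏ k, numBases (Fintype.card F) (dims D k) ≤
      Nat.card {v : {v : Fin n → V // LinearIndependent F v} // Compatible D v.1} := by
  have hcard : ∏ k, numBases (Fintype.card F) (dims D k) =
      Nat.card (∀ k, {s : Fin (dims D k) → D k // LinearIndependent F s}) := by
    rw [Nat.card_pi]
    refine Finset.prod_congr rfl fun k _ => ?_
    exact (card_linearIndependent (K := F) (V := D k) (k := dims D k) (le_refl _)).symm
  rw [hcard]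
  let e : (Σ k, Fin (dims D k)) ≃ Fin n := finSigmaFinEquiv.trans (finCongr (sum_dims hV hD))
  have he : ∀ k j, ((e ⟨k, j⟩ : Fin n) : ℕ) = offset (dims D) k + j := fun k j => by
    simp only [e, Equiv.trans_apply, finCongr_apply, Fin.val_cast, finSigmaFinEquiv_apply, offset]
  let g : (∀ k, {s : Fin (dims D k) → D k // LinearIndependent F s}) → Fin n → V :=
    fun s m => ((s (e.symm m).1).1 (e.symm m).2 : V)
  have hge : ∀ s k j, g s (e ⟨k, j⟩) = ((s k).1 j : V) := fun s k j => by
    simp only [g]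
    rw [Equiv.symm_apply_apply]
  have hspan : ∀ (s : ∀ k, {s : Fin (dims D k) → D k // LinearIndependent F s}) k,
      Submodule.span F (Set.range (s k).1) = ⊤ := fun s k =>
    (s k).2.span_eq_top_of_card_eq_finrank' (Fintype.card_fin _)
  have hli : ∀ s, LinearIndependent F (g s) := fun s => by
    let b : ∀ k, Module.Basis (Fin (dims D k)) F (D k) := fun k =>
      Module.Basis.mk (s k).2 (hspan s k).ge
    have h1 := (hD.collectedBasis b).linearIndependent
    rw [hD.collectedBasis_coe b] at h1
    have h2 := h1.comp e.symm e.symm.injective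
    convert h2 using 1
    funext m
    simp [g, b]
  have hcomp : ∀ s, Compatible D (g s) := fun s k => by
    have himg : g s '' {m | offset (dims D) k ≤ (m : ℕ) ∧ (m : ℕ) < offset (dims D) k + dims D k}
        = (D k).subtype '' Set.range (s k).1 := by
      ext x
      constructor
      · rintro ⟨m, ⟨h1, h2⟩, rfl⟩
        have hm : m = e ⟨k, ⟨m - offset (dims D) k, by omega⟩⟩ := by
          apply Fin.ext
          rw [he]
          simp only
          omega
        rw [hm, hge]
        exact ⟨_, ⟨_, rfl⟩, rfl⟩
      · rintro ⟨_, ⟨j, rfl⟩, rfl⟩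
        refine ⟨e ⟨k, j⟩, ?_, hge s k j⟩
        have := j.2
        simp only [Set.mem_ofPred_eq, he]
        omega
    rw [blockSpan, himg, ← Submodule.map_span, hspan, Submodule.map_top, Submodule.range_subtype]
  refine Nat.card_le_card_of_injective (fun s => ⟨⟨g s, hli s⟩, hcomp s⟩) fun s s' h => ?_
  have h' : g s = g s' := congrArg (fun x => x.1.1) h
  funext k
  apply Subtype.ext
  funext j
  apply Subtype.ext
  rw [← hge s, ← hge s', h']

/-- Double counting of pairs of a decomposition in `S` and a compatible ordered basis. -/
lemma sum_prod_numBases_le {n r : ℕ} (hV : Module.finrank F V = n)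
    (S : Finset (Fin r → Submodule F V)) (hS : ∀ D ∈ S, DirectSum.IsInternal D) (B : ℕ)
    (hB : ∀ v : Fin n → V, ∀ T ⊆ S, (∀ D ∈ T, Compatible D v) → T.card ≤ B) :
    ∑ D ∈ S, ∏ k, numBases (Fintype.card F) (dims D k) ≤ B * numBases (Fintype.card F) n := by
  classical
  have := Fintype.ofFinite {v : Fin n → V // LinearIndependent F v}
  have hc : Fintype.card {v : Fin n → V // LinearIndependent F v} =
      numBases (Fintype.card F) n := by
    rw [← Nat.card_eq_fintype_card, card_linearIndependent hV.ge, hV]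
    rfl
  let R : (Fin r → Submodule F V) → {v : Fin n → V // LinearIndependent F v} → Prop :=
    fun D v => Compatible D v.1
  calc ∑ D ∈ S, ∏ k, numBases (Fintype.card F) (dims D k)
      ≤ ∑ D ∈ S, (Finset.bipartiteAbove R Finset.univ D).card := by
        refine Finset.sum_le_sum fun D hD => (prod_numBases_le hV (hS D hD)).trans (le_of_eq ?_)
        rw [Nat.card_eq_fintype_card, Fintype.card_subtype]
        rfl
    _ = ∑ v, (Finset.bipartiteBelow R S v).card :=
        Finset.sum_card_bipartiteAbove_eq_sum_card_bipartiteBelow R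
    _ ≤ ∑ v : {v : Fin n → V // LinearIndependent F v}, B :=
        Finset.sum_le_sum fun v _ => hB v.1 _ (Finset.filter_subset _ _)
          fun D hD => (Finset.mem_filter.1 hD).2
    _ = B * numBases (Fintype.card F) n := by
        rw [Finset.sum_const, Finset.card_univ, hc, smul_eq_mul, mul_comm]

lemma card_filter_dims_le {n r : ℕ} (hV : Module.finrank F V = n)
    (S : Finset (Fin r → Submodule F V)) (hS : ∀ D ∈ S, DirectSum.IsInternal D)
    (a : Fin r → ℕ) (ha : ∑ k, a k = n) [DecidablePred fun D : Fin r → Submodule F V => dims D = a] :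
    (S.filter (fun D => dims D = a)).card ≤ weight (Fintype.card F) n a := by
  have h := sum_prod_numBases_le hV (S.filter (fun D => dims D = a))
    (fun D hD => hS D (Finset.mem_filter.1 hD).1) 1 (by
      intro v T hT hc
      refine Finset.card_le_one.2 fun D hD E hE => (hc D hD).ext (hc E hE) ?_
      rw [(Finset.mem_filter.1 (hT hD)).2, (Finset.mem_filter.1 (hT hE)).2])
  have h2 : ∑ D ∈ S with dims D = a, ∏ k, numBases (Fintype.card F) (dims D k)
      = ∑ D ∈ S with dims D = a, ∏ k, numBases (Fintype.card F) (a k) :=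
    Finset.sum_congr rfl fun D hD => by rw [(Finset.mem_filter.1 hD).2]
  rw [h2, Finset.sum_const, smul_eq_mul, one_mul, ← weight_mul Fintype.card_pos a ha] at h
  exact Nat.le_of_mul_le_mul_right h
    (Finset.prod_pos fun k _ => numBases_pos Fintype.one_lt_card _)

lemma offset_congr {r : ℕ} {a b : Fin r → ℕ} {k : Fin r} (h : ∀ i < k, a i = b i) :
    offset a k = offset b k :=
  Finset.sum_congr rfl fun i _ => h _ (by rw [Fin.lt_def]; exact i.2)

/-- Branching bound: if, within a finite set `S` of tuples of naturals, every prefix is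
continued by at most `t k` values at each position `k` but the last, and the last entry is
determined by the others, then `S` has at most `∏ t k` members. A tuple is encoded by the ranks
of its entries among the values that continue its prefix. -/
lemma card_le_prod_of_branching {p : ℕ} (S : Finset (Fin (p + 1) → ℕ)) (n : ℕ)
    (hsum : ∀ a ∈ S, ∑ k, a k = n) (t : Fin p → ℕ)
    (hbr : ∀ a ∈ S, ∀ k : Fin p,
      ((S.filter (fun b => ∀ i < k.castSucc, b i = a i)).image (fun b => b k.castSucc)).card
        ≤ t k) :
    S.card ≤ ∏ k, t k := by
  classical
  let C : (Fin (p + 1) → ℕ) → Fin p → Finset ℕ := fun a k =>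
    (S.filter (fun b => ∀ i < k.castSucc, b i = a i)).image (fun b => b k.castSucc)
  have hmem : ∀ a ∈ S, ∀ k, a k.castSucc ∈ C a k := fun a ha k =>
    Finset.mem_image.2 ⟨a, Finset.mem_filter.2 ⟨ha, fun _ _ => rfl⟩, rfl⟩
  let rk : (Fin (p + 1) → ℕ) → Fin p → ℕ := fun a k =>
    ((C a k).filter (· < a k.castSucc)).card
  have hcard : (Fintype.piFinset fun k => Finset.range (t k)).card = ∏ k, t k := by
    simp [Fintype.card_piFinset]
  rw [← hcard]
  refine Finset.card_le_card_of_injOn rk ?_ ?_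
  · intro a ha
    rw [Finset.mem_coe, Fintype.mem_piFinset]
    intro k
    rw [Finset.mem_range]
    refine lt_of_lt_of_le (Finset.card_lt_card ?_) (hbr a ha k)
    exact Finset.filter_ssubset.2 ⟨_, hmem a ha k, lt_irrefl _⟩
  · intro a ha b hb hab
    have hinit : ∀ m : ℕ, ∀ k : Fin p, (k : ℕ) = m → a k.castSucc = b k.castSucc := by
      intro m
      induction m using Nat.strong_induction_on with
      | _ m ih =>
        rintro k rfl
        have hpre : ∀ i < k.castSucc, a i = b i := by
          intro i hi
          have hik : (i : ℕ) < k := hi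
          exact ih i hik ⟨i, hik.trans k.2⟩ rfl
        have hC : C a k = C b k := by
          simp only [C]
          congr 1
          refine Finset.filter_congr fun c _ => ?_
          exact forall₂_congr fun i hi => by rw [hpre i hi]
        have hrk : rk a k = rk b k := congrFun hab k
        -- the smaller of two distinct members of the same set has smaller rank
        have hlt : ∀ x y : Fin (p + 1) → ℕ, x ∈ S → C x k = C y k →
            x k.castSucc < y k.castSucc → rk x k < rk y k := by
          intro x y hx hxy h
          refine Finset.card_lt_card ?_
          rw [← hxy, Finset.ssubset_iff_of_subset]
          · exact ⟨x k.castSucc, Finset.mem_filter.2 ⟨hmem x hx k, h⟩, by simp⟩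
          · exact Finset.monotone_filter_right _ fun z _ hz => lt_trans hz h
        rcases lt_trichotomy (a k.castSucc) (b k.castSucc) with h | h | h
        · exact absurd hrk (hlt a b ha hC h).ne
        · exact h
        · exact absurd hrk (hlt b a hb hC.symm h).ne'
    have hlast : a (Fin.last p) = b (Fin.last p) := by
      have h1 := hsum a ha
      rw [← hsum b hb, Fin.sum_univ_castSucc, Fin.sum_univ_castSucc,
        Finset.sum_congr rfl fun k _ => hinit _ k rfl] at h1
      omega
    funext k
    refine Fin.lastCases hlast (fun i => hinit _ i rfl) k

/-- At most `t 0 ⋯ t (p - 1)` members of the family are compatible with a given `v`: the `k`-th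
components of those sharing a dimension prefix are spans of nested blocks of `v`, hence form a
chain. -/
lemma card_compatible_le {n p : ℕ} (hV : Module.finrank F V = n)
    (S : Finset (Fin (p + 1) → Submodule F V)) (hS : ∀ D ∈ S, DirectSum.IsInternal D)
    (t : Fin (p + 1) → ℕ) (hchain : ∀ k, ChainFree (t k) {A | ∃ D ∈ S, D k = A})
    (v : Fin n → V) (T : Finset (Fin (p + 1) → Submodule F V)) (hT : T ⊆ S)
    (hc : ∀ D ∈ T, Compatible D v) : T.card ≤ ∏ k : Fin p, t k.castSucc := by
  classical
  rw [← Finset.card_image_of_injOn (f := dims)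
    fun D hD E hE h => (hc D hD).ext (hc E hE) h]
  refine card_le_prod_of_branching _ n ?_ _ ?_
  · intro a ha
    obtain ⟨D, hD, rfl⟩ := Finset.mem_image.1 ha
    exact sum_dims hV (hS D (hT hD))
  · intro a _ k
    set C := (((T.image dims).filter (fun b => ∀ i < k.castSucc, b i = a i)).image
      (fun b => b k.castSucc)) with hC
    by_contra! hlt
    obtain ⟨C', hC', hcard⟩ := Finset.exists_subset_card_eq (Nat.succ_le_of_lt hlt)
    have hx : ∀ x ∈ C', ∃ D ∈ S, D k.castSucc = blockSpan v (offset a k.castSucc) x ∧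
        Module.finrank F (D k.castSucc) = x := by
      intro x hx
      obtain ⟨b, hb, rfl⟩ := Finset.mem_image.1 (hC' hx)
      obtain ⟨hb, hpre⟩ := Finset.mem_filter.1 hb
      obtain ⟨D, hD, rfl⟩ := Finset.mem_image.1 hb
      refine ⟨D, hT hD, ?_, rfl⟩
      rw [← offset_congr hpre]
      exact hc D hD _
    let c := C'.orderEmbOfFin hcard
    refine hchain k.castSucc ⟨fun i => blockSpan v (offset a k.castSucc) (c i), ?_, ?_⟩
    · intro i j hij
      have hcij : c i < c j := c.strictMono hij
      refine lt_of_le_of_ne (blockSpan_mono v _ hcij.le) fun h => ?_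
      obtain ⟨D, -, hD, hDr⟩ := hx (c i) (Finset.orderEmbOfFin_mem _ _ _)
      obtain ⟨E, -, hE, hEr⟩ := hx (c j) (Finset.orderEmbOfFin_mem _ _ _)
      rw [hD.trans (h.trans hE.symm), hEr] at hDr
      omega
    · intro i
      obtain ⟨D, hD, hD', -⟩ := hx (c i) (Finset.orderEmbOfFin_mem _ _ _)
      exact ⟨D, hD, hD'⟩

/-- The LYM-type inequality, with an arbitrary index `k₀` left out of the product. The positions
are permuted so that `k₀` comes last. -/
lemma sum_prod_numBases_le_of_chainFree {n p : ℕ} (hV : Module.finrank F V = n)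
    (S : Finset (Fin (p + 1) → Submodule F V)) (hS : ∀ D ∈ S, DirectSum.IsInternal D)
    (t : Fin (p + 1) → ℕ) (hchain : ∀ k, ChainFree (t k) {A | ∃ D ∈ S, D k = A})
    (k₀ : Fin (p + 1)) (ht : 0 < t k₀) :
    ∑ D ∈ S, ∏ k, numBases (Fintype.card F) (dims D k) ≤
      ((∏ k, t k) / t k₀) * numBases (Fintype.card F) n := by
  classical
  let π : Equiv.Perm (Fin (p + 1)) := Equiv.swap k₀ (Fin.last p)
  have hprod : (∏ k, t k) / t k₀ = ∏ k : Fin p, t (π k.castSucc) := by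
    rw [← Equiv.prod_comp π t, Fin.prod_univ_castSucc]
    simp only [π, Equiv.swap_apply_right]
    exact Nat.mul_div_cancel _ ht
  have hinj : Function.Injective fun (D : Fin (p + 1) → Submodule F V) => D ∘ π :=
    π.surjective.injective_comp_right
  have hS' : ∀ D ∈ S.image (fun D => D ∘ π), DirectSum.IsInternal D := by
    intro E hE
    obtain ⟨D, hD, rfl⟩ := Finset.mem_image.1 hE
    have := hS D hD
    rw [DirectSum.isInternal_submodule_iff_iSupIndep_and_iSup_eq_top] at this ⊢
    exact ⟨this.1.comp π.injective, by rw [← this.2]; exact π.iSup_comp⟩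
  have h := sum_prod_numBases_le hV (S.image (fun D => D ∘ π)) hS' _
    (card_compatible_le hV (S.image (fun D => D ∘ π)) hS' (t ∘ π) (by
      intro k
      have := hchain (π k)
      simpa using this))
  rw [Finset.sum_image hinj.injOn] at h
  rw [hprod]
  refine le_trans (le_of_eq (Finset.sum_congr rfl fun D _ => ?_)) h
  exact (Equiv.prod_comp π fun k => numBases (Fintype.card F) (dims D k)).symm

end Compatible

/-- **Theorem (bound on families of `r`-decompositions of `𝔽_q^n`).**
If `𝒟` is a family of `r`-decompositions of `𝔽_q^n` such that the `k`-th
component family is `t k`-chain free for each `k`, then `|𝒟| ≤ m₁ + ⋯ + m_σ`,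
where `σ = (∏ t k) / max t k` and `m₁, …, m_σ` are the `σ` largest values of
`[n; a₁, …, a_r]_q ∏_{i<j} q^{aᵢ aⱼ}` over tuples with `∑ a i = n`. -/
theorem card_bound_decomposition_q (q n r : ℕ) (hq : IsPrimePow q) (hn : 0 < n)
    (hr : 0 < r)
    (F : Type) [Field F] [Fintype F] (hF : Fintype.card F = q)
    (t : Fin r → ℕ) (ht : ∀ k, 0 < t k)
    (𝒟 : Finset (Fin r → Submodule F (Fin n → F)))
    (hdecomp : ∀ D ∈ 𝒟, DirectSum.IsInternal D)
    (hchain : ∀ k : Fin r, ChainFree (t k) {A | ∃ D ∈ 𝒟, D k = A}) :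
    𝒟.card ≤ sumLargest
      ((Finset.Nat.antidiagonalTuple r n).val.map
        (fun a => (qFact q n / ∏ i, qFact q (a i)) *
          ∏ p ∈ Finset.univ.filter (fun p : Fin r × Fin r => p.1 < p.2),
            q ^ (a p.1 * a p.2)))
      ((∏ k, t k) / Finset.univ.sup t) := by
  classical
  subst hF
  obtain ⟨p, rfl⟩ : ∃ p, r = p + 1 := ⟨r - 1, by omega⟩
  have hV : Module.finrank F (Fin n → F) = n := Module.finrank_fin_fun F
  obtain ⟨k₀, -, hk₀⟩ := Finset.exists_mem_eq_sup Finset.univ Finset.univ_nonempty t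
  have hwpos : ∀ a : Fin (p + 1) → ℕ, ∑ k, a k = n → 0 < weight (Fintype.card F) n a := by
    intro a ha
    have := numBases_pos (Fintype.one_lt_card (α := F)) n
    rw [← weight_mul Fintype.card_pos a ha] at this
    exact Nat.pos_of_mul_pos_right this
  refine card_le_sumLargest 𝒟 (Finset.Nat.antidiagonalTuple (p + 1) n) dims
    (weight (Fintype.card F) n) _ ?_ ?_ ?_ ?_
  · exact fun D hD => Finset.Nat.mem_antidiagonalTuple.2 (sum_dims hV (hdecomp D hD))
  · exact fun a ha => hwpos a (Finset.Nat.mem_antidiagonalTuple.1 ha)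
  · exact fun a ha =>
      card_filter_dims_le hV 𝒟 hdecomp a (Finset.Nat.mem_antidiagonalTuple.1 ha)
  · have h := sum_prod_numBases_le_of_chainFree hV 𝒟 hdecomp t hchain k₀ (ht k₀)
    rw [← hk₀] at h
    have hN : (0 : ℚ) < numBases (Fintype.card F) n := by
      exact_mod_cast numBases_pos Fintype.one_lt_card n
    refine le_of_mul_le_mul_right ?_ hN
    have h' : ∑ D ∈ 𝒟, ((∏ k, numBases (Fintype.card F) (dims D k) : ℕ) : ℚ) ≤
        (((∏ k, t k) / Finset.univ.sup t : ℕ) : ℚ) * numBases (Fintype.card F) n := by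
      exact_mod_cast h
    rw [Finset.sum_mul]
    refine le_trans (le_of_eq (Finset.sum_congr rfl fun D hD => ?_)) h'
    have hs := sum_dims hV (hdecomp D hD)
    have hw : (weight (Fintype.card F) n (dims D) : ℚ) ≠ 0 := by
      exact_mod_cast (hwpos _ hs).ne'
    rw [← weight_mul Fintype.card_pos (dims D) hs]
    push_cast
    field_simp
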